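/- arXiv:1604.03089 — 2 statements merged into one kernel-verified Lean document; each statement's English description precedes it below -/
import Mathlib

section
/- Let f : (0,∞) → ℝ be operator convex. For positive definite matrices ρ_i, σ_i ∈ M_n(ℂ) and weights λ_i > 0 (i = 1,…,k), the standard f-divergence is jointly convex: S_f( Σ_i λ_i ρ_i ‖ Σ_i λ_i σ_i ) ≤ Σ_i λ_i S_f(ρ_i‖σ_i). -/
open Matrix
open scoped ComplexOrder

/-- `f : (0,∞) → ℝ` is operator convex: for every size `m`, positive definite
`A B : M_m(ℂ)` and `t ∈ [0,1]`, `f(tA + (1-t)B) ≤ t f(A) + (1-t) f(B)` in the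
Loewner order (`f` applied by the spectral functional calculus). -/
def OperatorConvexOn (f : ℝ → ℝ) : Prop :=
  ∀ (m : ℕ) (A B : Matrix (Fin m) (Fin m) ℂ), A.PosDef → B.PosDef →
    ∀ t : ℝ, 0 ≤ t → t ≤ 1 →
      (t • cfc f A + (1 - t) • cfc f B - cfc f (t • A + (1 - t) • B)).PosSemidef

/-- Spectral projection of a Hermitian matrix `A` onto the eigenvalue `a`. -/
noncomputable def specProj {n : ℕ} (A : Matrix (Fin n) (Fin n) ℂ) (a : ℝ) :
    Matrix (Fin n) (Fin n) ℂ :=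
  cfc (fun x : ℝ => if x = a then (1 : ℝ) else 0) A

/-- The standard `f`-divergence of positive definite matrices:
`S_f(ρ‖σ) = Σ_{a ∈ spec ρ} Σ_{b ∈ spec σ} b·f(a/b)·Tr(P_a Q_b)`. -/
noncomputable def Sf {n : ℕ} (f : ℝ → ℝ) (ρ σ : Matrix (Fin n) (Fin n) ℂ) : ℝ :=
  ∑ᶠ a ∈ spectrum ℝ ρ, ∑ᶠ b ∈ spectrum ℝ σ,
    b * f (a / b) * (Matrix.trace (specProj ρ a * specProj σ b)).re

lemma aux_inter {m κ : Type*} [Fintype m] [DecidableEq m] [Fintype κ] [DecidableEq κ]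
    (f : ℝ → ℝ) (B : Matrix m m ℂ) (hB : B.IsHermitian) (V : Matrix m κ ℂ) (e : κ → ℝ)
    (h : B * V = V * diagonal (fun k => (e k : ℂ))) :
    cfc f B * V = V * diagonal (fun k => (f (e k) : ℂ)) := by
  have hQ : (hB.eigenvectorUnitary : Matrix m m ℂ)ᴴ * (hB.eigenvectorUnitary : Matrix m m ℂ) = 1 :=
    Unitary.coe_star_mul_self _
  have hQ' : (hB.eigenvectorUnitary : Matrix m m ℂ) * (hB.eigenvectorUnitary : Matrix m m ℂ)ᴴ = 1 :=
    Unitary.coe_mul_star_self _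
  have hs : B = (hB.eigenvectorUnitary : Matrix m m ℂ) *
      diagonal (fun k => (hB.eigenvalues k : ℂ)) * (hB.eigenvectorUnitary : Matrix m m ℂ)ᴴ := by
    conv_lhs => rw [hB.spectral_theorem]
    rfl
  have hc : cfc f B = (hB.eigenvectorUnitary : Matrix m m ℂ) *
      diagonal (fun k => (f (hB.eigenvalues k) : ℂ)) *
        (hB.eigenvectorUnitary : Matrix m m ℂ)ᴴ := by
    rw [hB.cfc_eq]
    rfl
  generalize (hB.eigenvectorUnitary : Matrix m m ℂ) = Q at *
  generalize hB.eigenvalues = l at *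
  have h1 : diagonal (fun k => (l k : ℂ)) * (Qᴴ * V) =
      (Qᴴ * V) * diagonal (fun k => (e k : ℂ)) := by
    rw [Matrix.mul_assoc, ← h, hs]
    simp only [← Matrix.mul_assoc]
    rw [hQ, Matrix.one_mul]
  have h2 : diagonal (fun k => (f (l k) : ℂ)) * (Qᴴ * V) =
      (Qᴴ * V) * diagonal (fun k => (f (e k) : ℂ)) := by
    ext i k
    have := congrFun (congrFun h1 i) k
    rw [diagonal_mul, mul_diagonal] at this ⊢
    by_cases hz : (Qᴴ * V) i k = 0
    · simp [hz]
    · rw [mul_comm] at this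
      have := mul_left_cancel₀ hz this
      have : l i = e k := by exact_mod_cast this
      rw [this, mul_comm]
  rw [hc, Matrix.mul_assoc, Matrix.mul_assoc, h2, ← Matrix.mul_assoc, ← Matrix.mul_assoc, hQ',
    Matrix.one_mul]

lemma aux_diagquad {m : Type*} [Fintype m] [DecidableEq m] (d : m → ℝ) (y : m → ℂ) :
    star y ⬝ᵥ (diagonal (fun k => (d k : ℂ)) *ᵥ y) = ((∑ k, d k * Complex.normSq (y k) : ℝ) : ℂ) := by
  simp only [dotProduct, mulVec_diagonal, Pi.star_apply, Complex.ofReal_sum, Complex.ofReal_mul,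
    Complex.normSq_eq_conj_mul_self]
  refine Finset.sum_congr rfl fun k _ => ?_
  simp only [Complex.star_def]
  ring

lemma aux_jensen_fin {m : ℕ} {κ : Type*} [Fintype κ] [DecidableEq κ]
    (f : ℝ → ℝ) (hf : OperatorConvexOn f) (d : Fin m → ℝ) (hd : ∀ i, 0 < d i)
    (e : κ → ℝ) (V : Matrix (Fin m) κ ℂ) (hV : Vᴴ * V = 1)
    (hVA : Vᴴ * diagonal (fun k => (d k : ℂ)) * V = diagonal (fun k => (e k : ℂ)))
    (x : κ → ℂ) :
    ∑ k, f (e k) * Complex.normSq (x k) ≤ ∑ i, f (d i) * Complex.normSq ((V *ᵥ x) i) := by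
  set A : Matrix (Fin m) (Fin m) ℂ := diagonal (fun k => (d k : ℂ)) with hA
  have hApd : A.PosDef := by
    rw [hA, posDef_diagonal_iff]
    intro i
    exact_mod_cast hd i
  set U : Matrix (Fin m) (Fin m) ℂ := (2 : ℂ) • (V * Vᴴ) - 1 with hU
  have hUh : Uᴴ = U := by
    simp [hU, conjTranspose_sub, conjTranspose_smul, conjTranspose_mul]
  have hUV : U * V = V := by
    rw [hU, Matrix.sub_mul, Matrix.smul_mul, Matrix.mul_assoc, hV, Matrix.one_mul, Matrix.mul_one]
    module
  have hVU : Vᴴ * U = Vᴴ := by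
    rw [← hUh, ← conjTranspose_mul, hUV]
  have hUU : U * U = 1 := by
    conv_lhs => rw [hU]
    rw [← hU, Matrix.sub_mul, Matrix.smul_mul, Matrix.mul_assoc, hVU, Matrix.one_mul]
    rw [hU]; abel
  have hU' : IsUnit U := ⟨⟨U, U, hUU, hUU⟩, rfl⟩
  have hBpd : (U * A * U).PosDef := by
    have := (Matrix.IsUnit.posDef_star_left_conjugate_iff (x := A) hU').2 hApd
    rwa [star_eq_conjTranspose, hUh] at this
  have key := hf m A (U * A * U) hApd hBpd (1/2) (by norm_num) (by norm_num)
  set B : Matrix (Fin m) (Fin m) ℂ := (1/2 : ℝ) • A + (1 - 1/2 : ℝ) • (U * A * U) with hB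
  have hBh : B.IsHermitian := by
    have h1 := hApd.isHermitian
    have h2 := hBpd.isHermitian
    unfold Matrix.IsHermitian at *
    simp [hB, h1, h2, conjTranspose_add, conjTranspose_smul, -conjTranspose_mul]
  have hBV : B * V = V * diagonal (fun k => (e k : ℂ)) := by
    have h3 : U * A * U * V = (2 : ℂ) • (V * diagonal (fun k => (e k : ℂ))) - A * V := by
      rw [Matrix.mul_assoc, hUV, ← hVA, Matrix.mul_assoc, hU, Matrix.sub_mul, Matrix.smul_mul,
        Matrix.one_mul]
      simp only [Matrix.mul_assoc]
    rw [hB, Matrix.add_mul, Matrix.smul_mul, Matrix.smul_mul, h3]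
    module
  have c1 : cfc f A = diagonal (fun k => (f (d k) : ℂ)) := by
    have := aux_inter f A hApd.isHermitian 1 d (by simp [hA])
    simpa using this
  have c2 : cfc f (U * A * U) = U * diagonal (fun k => (f (d k) : ℂ)) * U := by
    have := aux_inter f (U * A * U) hBpd.isHermitian U d
      (by rw [Matrix.mul_assoc, hUU, Matrix.mul_one])
    rw [← this, Matrix.mul_assoc (cfc f _), hUU, Matrix.mul_one]
  have c3 := aux_inter f B hBh V e hBV
  rw [c1, c2] at key
  set F : Matrix (Fin m) (Fin m) ℂ := diagonal (fun k => (f (d k) : ℂ)) with hF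
  have k2 := (key.conjTranspose_mul_mul_same V).dotProduct_mulVec_nonneg x
  have e1 : Vᴴ * ((1/2 : ℝ) • F + (1 - 1/2 : ℝ) • (U * F * U) - cfc f B) * V
      = Vᴴ * F * V - diagonal (fun k => (f (e k) : ℂ)) := by
    have h4 : Vᴴ * (U * F * U) * V = Vᴴ * F * V := by
      rw [Matrix.mul_assoc U, ← Matrix.mul_assoc Vᴴ, hVU, Matrix.mul_assoc Vᴴ, Matrix.mul_assoc F,
        hUV, ← Matrix.mul_assoc]
    have h5 : Vᴴ * cfc f B * V = diagonal (fun k => (f (e k) : ℂ)) := by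
      rw [Matrix.mul_assoc, c3, ← Matrix.mul_assoc, hV, Matrix.one_mul]
    rw [Matrix.mul_sub, Matrix.mul_add, Matrix.sub_mul, Matrix.add_mul, h5, Matrix.mul_smul,
      Matrix.mul_smul, Matrix.smul_mul, Matrix.smul_mul, h4]
    module
  rw [e1, sub_mulVec, dotProduct_sub, aux_diagquad] at k2
  have e2 : star x ⬝ᵥ ((Vᴴ * F * V) *ᵥ x) = star (V *ᵥ x) ⬝ᵥ (F *ᵥ (V *ᵥ x)) := by
    rw [star_mulVec, ← dotProduct_mulVec, mulVec_mulVec, mulVec_mulVec, Matrix.mul_assoc]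
  rw [e2, hF, aux_diagquad, ← Complex.ofReal_sub] at k2
  exact sub_nonneg.1 (Complex.zero_le_real.1 k2)

lemma aux_jensen {ι κ : Type*} [Fintype ι] [DecidableEq ι] [Fintype κ] [DecidableEq κ]
    (f : ℝ → ℝ) (hf : OperatorConvexOn f) (d : ι → ℝ) (hd : ∀ i, 0 < d i)
    (e : κ → ℝ) (V : Matrix ι κ ℂ) (hV : Vᴴ * V = 1)
    (hVA : Vᴴ * diagonal (fun k => (d k : ℂ)) * V = diagonal (fun k => (e k : ℂ)))
    (x : κ → ℂ) :
    ∑ k, f (e k) * Complex.normSq (x k) ≤ ∑ i, f (d i) * Complex.normSq ((V *ᵥ x) i) := by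
  let q := (Fintype.equivFin ι).symm
  have := aux_jensen_fin f hf (d ∘ q) (fun i => hd _) e (V.submatrix q id)
    (by
      rw [← hV]; ext a b
      simp only [mul_apply, conjTranspose_apply, submatrix_apply, id]
      exact q.sum_comp (fun i => star (V i a) * V i b))
    (by
      rw [← hVA]; ext a b
      rw [mul_apply, mul_apply]
      simp only [conjTranspose_apply, submatrix_apply, id, mul_diagonal]
      exact q.sum_comp (fun i => star (V i a) * (d i : ℂ) * V i b)) x
  refine this.trans (le_of_eq ?_)
  exact q.sum_comp (fun i => f (d i) * Complex.normSq ((V *ᵥ x) i))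

lemma aux_diag {n : ℕ} (ρ : Matrix (Fin n) (Fin n) ℂ) (h : ρ.PosDef) :
    ∃ (U : Matrix (Fin n) (Fin n) ℂ) (a : Fin n → ℝ), Uᴴ * U = 1 ∧ U * Uᴴ = 1 ∧ (∀ j, 0 < a j) ∧
      ρ = U * diagonal (fun k => (a k : ℂ)) * Uᴴ ∧ spectrum ℝ ρ = Set.range a ∧
      ∀ g : ℝ → ℝ, cfc g ρ = U * diagonal (fun k => (g (a k) : ℂ)) * Uᴴ := by
  have hB := h.isHermitian
  refine ⟨hB.eigenvectorUnitary, hB.eigenvalues, Unitary.coe_star_mul_self _,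
    Unitary.coe_mul_star_self _, h.eigenvalues_pos, ?_, hB.spectrum_real_eq_range_eigenvalues, ?_⟩
  · conv_lhs => rw [hB.spectral_theorem]
    rfl
  · intro g
    rw [hB.cfc_eq]
    rfl

lemma aux_Sf {n : ℕ} (f : ℝ → ℝ) (ρ σ U W : Matrix (Fin n) (Fin n) ℂ) (a b : Fin n → ℝ)
    (ha : spectrum ℝ ρ = Set.range a) (hb : spectrum ℝ σ = Set.range b)
    (hU : ∀ g : ℝ → ℝ, cfc g ρ = U * diagonal (fun k => (g (a k) : ℂ)) * Uᴴ)
    (hW : ∀ g : ℝ → ℝ, cfc g σ = W * diagonal (fun k => (g (b k) : ℂ)) * Wᴴ) :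
    Sf f ρ σ = ∑ j, ∑ l, b l * f (a j / b l) * Complex.normSq ((Uᴴ * W) j l) := by
  have htr : ∀ c c' : ℝ, (Matrix.trace (specProj ρ c * specProj σ c')).re =
      ∑ j, ∑ l, if a j = c then (if b l = c' then Complex.normSq ((Uᴴ * W) j l) else 0) else 0 := by
    intro c c'
    unfold specProj
    rw [hU, hW]
    set D := diagonal (fun k => (((if a k = c then (1:ℝ) else 0 : ℝ)) : ℂ)) with hD
    set E := diagonal (fun k => (((if b k = c' then (1:ℝ) else 0 : ℝ)) : ℂ)) with hE
    have : Matrix.trace (U * D * Uᴴ * (W * E * Wᴴ)) = Matrix.trace ((D * (Uᴴ * W)) * (E * (Uᴴ * W)ᴴ)) := by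
      rw [conjTranspose_mul, conjTranspose_conjTranspose]
      simp only [Matrix.mul_assoc]
      rw [Matrix.trace_mul_comm U]
      simp only [Matrix.mul_assoc]
    rw [this]
    simp only [Matrix.trace, diag_apply, Complex.re_sum]
    refine Finset.sum_congr rfl fun j _ => ?_
    rw [mul_apply, Complex.re_sum]
    refine Finset.sum_congr rfl fun l _ => ?_
    rw [hD, hE, diagonal_mul, diagonal_mul, conjTranspose_apply]
    split_ifs <;> simp [Complex.normSq_apply]
  have hra : spectrum ℝ ρ = ((Finset.univ.image a : Finset ℝ) : Set ℝ) := by simp [ha]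
  have hrb : spectrum ℝ σ = ((Finset.univ.image b : Finset ℝ) : Set ℝ) := by simp [hb]
  unfold Sf
  rw [hra, hrb]
  simp only [finsum_mem_coe_finset, htr, Finset.mul_sum]
  have e1 : ∀ c c' : ℝ, ∀ j l, c' * f (c / c') * (if a j = c then (if b l = c' then Complex.normSq ((Uᴴ * W) j l) else 0) else 0) = if a j = c then (if b l = c' then b l * f (a j / b l) * Complex.normSq ((Uᴴ * W) j l) else 0) else 0 := by
    intro c c' j l
    split_ifs with h1 h2
    · rw [h1, h2]
    · simp
    · simp
  simp only [e1]
  calc _ = ∑ c ∈ Finset.univ.image a, ∑ j, ∑ l, ∑ c' ∈ Finset.univ.image b, (if a j = c then (if b l = c' then b l * f (a j / b l) * Complex.normSq ((Uᴴ * W) j l) else 0) else 0) := by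
        refine Finset.sum_congr rfl fun c _ => ?_
        rw [Finset.sum_comm]
        refine Finset.sum_congr rfl fun j _ => ?_
        rw [Finset.sum_comm]
    _ = ∑ j, ∑ l, ∑ c ∈ Finset.univ.image a, ∑ c' ∈ Finset.univ.image b, (if a j = c then (if b l = c' then b l * f (a j / b l) * Complex.normSq ((Uᴴ * W) j l) else 0) else 0) := by
        rw [Finset.sum_comm]
        refine Finset.sum_congr rfl fun j _ => ?_
        rw [Finset.sum_comm]
    _ = _ := by
        refine Finset.sum_congr rfl fun j _ => Finset.sum_congr rfl fun l _ => ?_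
        have : ∀ c, (∑ c' ∈ Finset.univ.image b, (if a j = c then (if b l = c' then b l * f (a j / b l) * Complex.normSq ((Uᴴ * W) j l) else 0) else 0)) = if a j = c then b l * f (a j / b l) * Complex.normSq ((Uᴴ * W) j l) else 0 := by
          intro c
          split_ifs with h
          · rw [Finset.sum_ite_eq, if_pos (by simp)]
          · simp
        simp only [this]
        rw [Finset.sum_ite_eq, if_pos (by simp)]

lemma aux_V {n k : ℕ} (X T : Fin k → Matrix (Fin n) (Fin n) ℂ) (α β : Fin k → Fin n → ℂ)
    (V : Matrix (Fin k × Fin n × Fin n) (Fin n × Fin n) ℂ)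
    (hV : ∀ i j l j' l', V (i, j, l) (j', l') = X i j j' * T i l' l) (p q : Fin n × Fin n) :
    (Vᴴ * diagonal (fun z : Fin k × Fin n × Fin n => α z.1 z.2.1 * β z.1 z.2.2) * V) p q =
      ∑ i, ((X i)ᴴ * diagonal (α i) * X i) p.1 q.1 * (T i * diagonal (β i) * (T i)ᴴ) q.2 p.2 := by
  obtain ⟨p1, p2⟩ := p
  obtain ⟨q1, q2⟩ := q
  rw [mul_apply]
  simp only [mul_diagonal, Fintype.sum_prod_type, conjTranspose_apply, hV, star_mul']
  refine Finset.sum_congr rfl fun i _ => ?_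
  simp only [mul_apply (N := X i), mul_apply (N := (T i)ᴴ), mul_diagonal, conjTranspose_apply]
  rw [Finset.sum_mul_sum]
  refine Finset.sum_congr rfl fun j _ => Finset.sum_congr rfl fun l _ => ?_
  ring

lemma aux_zero {n : ℕ} (f : ℝ → ℝ) : Sf f (0 : Matrix (Fin n) (Fin n) ℂ) 0 = 0 := by
  unfold Sf
  have : ∀ b ∈ spectrum ℝ (0 : Matrix (Fin n) (Fin n) ℂ), b = 0 := by
    intro b hb
    rcases subsingleton_or_nontrivial (Matrix (Fin n) (Fin n) ℂ) with h | h
    · simp [spectrum.of_subsingleton] at hb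
    · simpa [spectrum.zero_eq] using hb
  rw [finsum_mem_eq_zero_of_forall_eq_zero]
  intro a _
  apply finsum_mem_eq_zero_of_forall_eq_zero
  intro b hb
  simp [this b hb]

/-- joint convexity of the standard `f`-divergence for operator convex `f`. -/
theorem stmt13 {n k : ℕ} (f : ℝ → ℝ) (hf : OperatorConvexOn f)
    (ρ σ : Fin k → Matrix (Fin n) (Fin n) ℂ) (lam : Fin k → ℝ)
    (hρ : ∀ i, (ρ i).PosDef) (hσ : ∀ i, (σ i).PosDef) (hlam : ∀ i, 0 < lam i) :
    Sf f (∑ i, lam i • ρ i) (∑ i, lam i • σ i) ≤ ∑ i, lam i * Sf f (ρ i) (σ i) := by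
  rcases Nat.eq_zero_or_pos k with rfl | hk
  · simp [aux_zero]
  have hne : (Finset.univ : Finset (Fin k)).Nonempty := ⟨⟨0, hk⟩, Finset.mem_univ _⟩
  have hpd : ∀ τ : Fin k → Matrix (Fin n) (Fin n) ℂ, (∀ i, (τ i).PosDef) →
      (∑ i, lam i • τ i).PosDef := by
    intro τ hτ
    have : ∀ s : Finset (Fin k), s.Nonempty → (∑ i ∈ s, lam i • τ i).PosDef := by
      intro s hs
      induction hs using Finset.Nonempty.cons_induction with
      | singleton a => simpa using (hτ a).smul (hlam a)
      | cons a s h hs ih => rw [Finset.sum_cons]; exact ((hτ a).smul (hlam a)).add ih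
    exact this _ hne
  obtain ⟨U, a, hU1, hU2, ha, hρe, hsa, hca⟩ := aux_diag _ (hpd ρ hρ)
  obtain ⟨W, b, hW1, hW2, hb, hσe, hsb, hcb⟩ := aux_diag _ (hpd σ hσ)
  choose Ui ai hUi1 hUi2 hai hρei hsai hcai using fun i => aux_diag _ (hρ i)
  choose Wi bi hWi1 hWi2 hbi hσei hsbi hcbi using fun i => aux_diag _ (hσ i)
  rw [aux_Sf f _ _ U W a b hsa hsb hca hcb]
  simp_rw [fun i => aux_Sf f _ _ (Ui i) (Wi i) (ai i) (bi i) (hsai i) (hsbi i) (hcai i) (hcbi i)]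
  let S : Matrix (Fin n) (Fin n) ℂ := diagonal (fun l => ((Real.sqrt (b l) : ℝ) : ℂ))
  let S' : Matrix (Fin n) (Fin n) ℂ := diagonal (fun l => (((Real.sqrt (b l))⁻¹ : ℝ) : ℂ))
  let R : Fin k → Matrix (Fin n) (Fin n) ℂ :=
    fun i => diagonal (fun l => ((Real.sqrt (lam i * bi i l) : ℝ) : ℂ))
  have hS'h : S'ᴴ = S' := by
    simp only [S', diagonal_conjTranspose]; congr 1; ext l; simp
  have hRh : ∀ i, (R i)ᴴ = R i := by
    intro i; simp only [R, diagonal_conjTranspose]; congr 1; ext l; simp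
  have hSS' : S * S' = 1 := by
    simp only [S, S', diagonal_mul_diagonal, ← Complex.ofReal_mul]
    rw [← diagonal_one]; congr 1; ext l
    rw [mul_inv_cancel₀ (Real.sqrt_pos.2 (hb l)).ne']; simp
  let X : Fin k → Matrix (Fin n) (Fin n) ℂ := fun i => (Ui i)ᴴ * U
  let T : Fin k → Matrix (Fin n) (Fin n) ℂ := fun i => S' * Wᴴ * Wi i * R i
  let V : Matrix (Fin k × Fin n × Fin n) (Fin n × Fin n) ℂ :=
    fun z w => X z.1 z.2.1 w.1 * T z.1 w.2 z.2.2
  have hXX : ∀ i, (X i)ᴴ * X i = 1 := by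
    intro i
    simp only [X, conjTranspose_mul, conjTranspose_conjTranspose]
    rw [Matrix.mul_assoc, ← Matrix.mul_assoc (Ui i), hUi2, Matrix.one_mul, hU1]
  have hXa : ∀ i, (X i)ᴴ * diagonal (fun j => (ai i j : ℂ)) * X i = Uᴴ * ρ i * U := by
    intro i
    rw [hρei i]
    simp only [X, conjTranspose_mul, conjTranspose_conjTranspose, Matrix.mul_assoc]
  have hT : ∀ i (M : Matrix (Fin n) (Fin n) ℂ),
      T i * M * (T i)ᴴ = S' * (Wᴴ * (Wi i * (R i * M * R i) * (Wi i)ᴴ) * W) * S' := by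
    intro i M
    simp only [T, conjTranspose_mul, conjTranspose_conjTranspose, Matrix.mul_assoc, hS'h, hRh]
  have hT1 : ∀ i, T i * (T i)ᴴ = S' * (Wᴴ * (lam i • σ i) * W) * S' := by
    intro i
    have := hT i 1
    rw [Matrix.mul_one, Matrix.mul_one] at this
    rw [this]
    have : R i * R i = lam i • diagonal (fun l => (bi i l : ℂ)) := by
      simp only [R, diagonal_mul_diagonal, ← Complex.ofReal_mul]
      rw [← diagonal_smul]; congr 1; ext l
      rw [Real.mul_self_sqrt (mul_pos (hlam i) (hbi i l)).le]; simp
    rw [this, Matrix.mul_smul, Matrix.smul_mul, ← hσei i]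
  have hT2 : ∀ i, T i * diagonal (fun l => (((bi i l)⁻¹ : ℝ) : ℂ)) * (T i)ᴴ
      = lam i • diagonal (fun l => (((b l)⁻¹ : ℝ) : ℂ)) := by
    intro i
    rw [hT]
    have : R i * diagonal (fun l => (((bi i l)⁻¹ : ℝ) : ℂ)) * R i = lam i • 1 := by
      simp only [R, diagonal_mul_diagonal, ← Complex.ofReal_mul]
      rw [← diagonal_one, ← diagonal_smul]; congr 1; ext l
      rw [mul_right_comm, Real.mul_self_sqrt (mul_pos (hlam i) (hbi i l)).le,
        mul_assoc, mul_inv_cancel₀ (hbi i l).ne']; simp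
    rw [this, Matrix.mul_smul, Matrix.smul_mul, Matrix.mul_one, hWi2, Matrix.mul_smul,
      Matrix.smul_mul, Matrix.mul_one, hW1, Matrix.mul_smul, Matrix.smul_mul, Matrix.mul_one]
    congr 1
    simp only [S', diagonal_mul_diagonal, ← Complex.ofReal_mul]
    congr 1; ext l
    rw [← mul_inv, Real.mul_self_sqrt (hb l).le]
  have hsT : ∑ i, T i * (T i)ᴴ = 1 := by
    simp only [hT1]
    rw [← Finset.sum_mul, ← Finset.mul_sum, ← Finset.sum_mul, ← Finset.mul_sum, hσe]
    have : Wᴴ * (W * diagonal (fun k => (b k : ℂ)) * Wᴴ) * W = diagonal (fun k => (b k : ℂ)) := by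
      simp only [Matrix.mul_assoc, hW1, Matrix.mul_one]
      rw [← Matrix.mul_assoc, hW1, Matrix.one_mul]
    rw [this]
    simp only [S', diagonal_mul_diagonal, ← Complex.ofReal_mul]
    rw [← diagonal_one]; congr 1; ext l
    have h0 := (Real.sqrt_pos.2 (hb l)).ne'
    have h1 := Real.mul_self_sqrt (hb l).le
    have : (√(b l))⁻¹ * b l * (√(b l))⁻¹ = 1 := by
      nth_rewrite 2 [← h1]; field_simp
    rw [this]; simp
  have hsX : ∑ i, lam i • ((X i)ᴴ * diagonal (fun j => (ai i j : ℂ)) * X i)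
      = diagonal (fun j => (a j : ℂ)) := by
    simp only [hXa]
    have : ∀ i, lam i • (Uᴴ * ρ i * U) = Uᴴ * (lam i • ρ i) * U := by
      intro i; rw [Matrix.mul_smul, Matrix.smul_mul]
    simp only [this]
    rw [← Finset.sum_mul, ← Finset.mul_sum, hρe]
    simp only [Matrix.mul_assoc, hU1, Matrix.mul_one]
    rw [← Matrix.mul_assoc, hU1, Matrix.one_mul]
  have hVV : Vᴴ * V = 1 := by
    ext p q
    have := aux_V X T (fun _ _ => 1) (fun _ _ => 1) V (fun _ _ _ _ _ => rfl) p q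
    simp only [mul_one, diagonal_one, Matrix.mul_one, hXX] at this
    rw [this, ← Finset.mul_sum, ← Matrix.sum_apply, hsT]
    obtain ⟨p1, p2⟩ := p
    obtain ⟨q1, q2⟩ := q
    simp only [one_apply, Prod.mk.injEq]
    by_cases h1 : p1 = q1 <;> by_cases h2 : p2 = q2
    · subst h1; subst h2; simp
    · have h3 : ¬ q2 = p2 := fun h => h2 h.symm
      simp [h2, h3]
    · simp [h1]
    · simp [h1]
  have hVA : Vᴴ * diagonal (fun z : Fin k × Fin n × Fin n =>
        ((ai z.1 z.2.1 / bi z.1 z.2.2 : ℝ) : ℂ)) * V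
      = diagonal (fun w : Fin n × Fin n => ((a w.1 / b w.2 : ℝ) : ℂ)) := by
    ext p q
    have := aux_V X T (fun i j => (ai i j : ℂ)) (fun i l => (((bi i l)⁻¹ : ℝ) : ℂ)) V
      (fun _ _ _ _ _ => rfl) p q
    simp only [← Complex.ofReal_mul, ← div_eq_mul_inv, hT2] at this
    rw [this]
    have e : ∀ i, ((X i)ᴴ * diagonal (fun j => (ai i j : ℂ)) * X i) p.1 q.1 *
        (lam i • diagonal (fun l => (((b l)⁻¹ : ℝ) : ℂ))) q.2 p.2 =
        (lam i • ((X i)ᴴ * diagonal (fun j => (ai i j : ℂ)) * X i)) p.1 q.1 *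
          (diagonal (fun l => (((b l)⁻¹ : ℝ) : ℂ)) : Matrix (Fin n) (Fin n) ℂ) q.2 p.2 := by
      intro i
      rw [Matrix.smul_apply, Matrix.smul_apply, mul_smul_comm, smul_mul_assoc]
    simp only [e]
    rw [← Finset.sum_mul, ← Matrix.sum_apply, hsX]
    obtain ⟨p1, p2⟩ := p
    obtain ⟨q1, q2⟩ := q
    simp only [diagonal_apply, Prod.mk.injEq]
    by_cases h1 : p1 = q1 <;> by_cases h2 : p2 = q2
    · subst h1; subst h2; simp [div_eq_mul_inv]
    · have h3 : ¬ q2 = p2 := fun h => h2 h.symm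
      simp [h2, h3]
    · simp [h1]
    · simp [h1]
  let x : Matrix (Fin n) (Fin n) ℂ := Uᴴ * W * S
  have main := aux_jensen f hf (fun z : Fin k × Fin n × Fin n => ai z.1 z.2.1 / bi z.1 z.2.2)
    (fun z => div_pos (hai _ _) (hbi _ _)) (fun w : Fin n × Fin n => a w.1 / b w.2) V hVV hVA
    (fun w => x w.1 w.2)
  have hVx : ∀ i j l, (V *ᵥ (fun w => x w.1 w.2)) (i, j, l) = ((Ui i)ᴴ * Wi i * R i) j l := by
    intro i j l
    have : X i * x * T i = (Ui i)ᴴ * Wi i * R i := by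
      calc X i * x * T i = (Ui i)ᴴ * (U * Uᴴ) * W * (S * S') * Wᴴ * Wi i * R i := by
            simp only [X, x, T, Matrix.mul_assoc]
        _ = (Ui i)ᴴ * (W * Wᴴ) * Wi i * R i := by
            rw [hU2, hSS']; simp only [Matrix.mul_one, Matrix.mul_assoc]
        _ = _ := by rw [hW2, Matrix.mul_one]
    rw [← this, mul_apply]
    simp only [mulVec, dotProduct, V, Fintype.sum_prod_type, mul_apply (M := X i), Finset.sum_mul]
    rw [Finset.sum_comm]
    refine Finset.sum_congr rfl fun _ _ => Finset.sum_congr rfl fun _ _ => ?_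
    ring
  simp only [Fintype.sum_prod_type, hVx] at main
  simp only [x, S, R, mul_diagonal, Complex.normSq_mul, Complex.normSq_ofReal] at main
  convert main using 1
  · refine Finset.sum_congr rfl fun j _ => Finset.sum_congr rfl fun l _ => ?_
    rw [Real.mul_self_sqrt (hb l).le]; ring
  · refine Finset.sum_congr rfl fun i _ => ?_
    rw [Finset.mul_sum]
    refine Finset.sum_congr rfl fun j _ => ?_
    rw [Finset.mul_sum]
    refine Finset.sum_congr rfl fun l _ => ?_
    rw [Real.mul_self_sqrt (mul_pos (hlam i) (hbi i l)).le]; ring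
end

section
/- A function f : (0,∞) → ℝ is operator convex if and only if its transpose f̃ : (0,∞) → ℝ, defined by f̃(x) := x · f(1/x), is operator convex. -/
open Matrix
open scoped ComplexOrder

theorem oc_intertwine {m n : Type*} [Fintype m] [DecidableEq m] [Fintype n] [DecidableEq n]
    (f : ℝ → ℝ) {A : Matrix m m ℂ} {B : Matrix n n ℂ} (hA : A.IsHermitian) (hB : B.IsHermitian)
    (V : Matrix m n ℂ) (h : A * V = V * B) : cfc f A * V = V * cfc f B := by
  classical
  have hfin : (spectrum ℝ A ∪ spectrum ℝ B).Finite :=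
    A.finite_real_spectrum.union B.finite_real_spectrum
  obtain ⟨p, hp⟩ : ∃ p : Polynomial ℝ, ∀ x ∈ spectrum ℝ A ∪ spectrum ℝ B, p.eval x = f x := by
    refine ⟨Lagrange.interpolate hfin.toFinset id f, fun x hx => ?_⟩
    exact Lagrange.eval_interpolate_at_node (v := id) (r := f) (Set.injOn_id _) (by simpa using hx)
  have hA' : IsSelfAdjoint A := hA
  have hB' : IsSelfAdjoint B := hB
  have e1 : cfc f A = Polynomial.aeval A p := by
    rw [← cfc_polynomial p A]
    exact cfc_congr fun x hx => (hp x (Or.inl hx)).symm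
  have e2 : cfc f B = Polynomial.aeval B p := by
    rw [← cfc_polynomial p B]
    exact cfc_congr fun x hx => (hp x (Or.inr hx)).symm
  rw [e1, e2]
  clear e1 e2 hp
  have hpow : ∀ k : ℕ, A ^ k * V = V * B ^ k := by
    intro k
    induction k with
    | zero => simp
    | succ k ih => rw [pow_succ, Matrix.mul_assoc, h, ← Matrix.mul_assoc, ih, Matrix.mul_assoc,
        ← pow_succ]
  induction p using Polynomial.induction_on' with
  | add p q hp hq => simp [Matrix.add_mul, Matrix.mul_add, hp, hq]
  | monomial k a =>
    simp only [Polynomial.aeval_monomial, ← Algebra.smul_def, Matrix.smul_mul, Matrix.mul_smul,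
      hpow]

theorem oc_fintype {f : ℝ → ℝ} (hf : OperatorConvexOn f) {n : Type*} [Fintype n] [DecidableEq n]
    (A B : Matrix n n ℂ) (hA : A.PosDef) (hB : B.PosDef) (t : ℝ) (h0 : 0 ≤ t) (h1 : t ≤ 1)
    (hC : (t • A + (1 - t) • B).IsHermitian) :
    (t • cfc f A + (1 - t) • cfc f B - cfc f (t • A + (1 - t) • B)).PosSemidef := by
  let e := Fintype.equivFin n
  have key : ∀ M : Matrix n n ℂ, M.IsHermitian →
      cfc f (M.submatrix e.symm e.symm) = (cfc f M).submatrix e.symm e.symm := by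
    intro M hM
    have := oc_intertwine f (hM.submatrix e.symm) hM
      ((1 : Matrix n n ℂ).submatrix e.symm id) (by
        have h1 : (1 : Matrix n n ℂ).submatrix e.symm id * M = M.submatrix e.symm id := by
          ext i j; simp [Matrix.mul_apply, Matrix.one_apply]
        rw [h1]
        ext i j; simp [Matrix.mul_apply, Matrix.one_apply, e.symm_apply_eq])
    have h2 := congrArg (fun N => N.submatrix id e.symm) this
    ext i j
    have h3 := congrFun (congrFun h2 i) j
    simpa [Matrix.mul_apply, Matrix.one_apply] using h3
  have := hf _ (A.submatrix e.symm e.symm) (B.submatrix e.symm e.symm)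
    (hA.submatrix e.symm.injective) (hB.submatrix e.symm.injective) t h0 h1
  have hs : t • A.submatrix e.symm e.symm + (1 - t) • B.submatrix e.symm e.symm
      = (t • A + (1 - t) • B).submatrix e.symm e.symm := rfl
  rw [hs, key _ hA.1, key _ hB.1, key _ hC] at this
  exact (Matrix.posSemidef_submatrix_equiv e.symm).1 this

theorem oc_spec_pos {n : Type*} [Fintype n] [DecidableEq n] {A : Matrix n n ℂ} (hA : A.PosDef)
    {x : ℝ} (hx : x ∈ spectrum ℝ A) : 0 < x := by
  rw [hA.1.spectrum_real_eq_range_eigenvalues] at hx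
  obtain ⟨i, rfl⟩ := hx
  exact hA.eigenvalues_pos i

theorem oc_comb {n : Type*} [Fintype n] {A B : Matrix n n ℂ}
    (hA : A.PosDef) (hB : B.PosDef) {t : ℝ} (h0 : 0 ≤ t) (h1 : t ≤ 1) :
    (t • A + (1 - t) • B).PosDef := by
  rcases h0.eq_or_lt with rfl | h0
  · simpa using hB
  · exact (hA.smul h0).add_posSemidef (hB.posSemidef.smul (sub_nonneg.2 h1))

theorem oc_cont {n : Type*} [Fintype n] [DecidableEq n] (A : Matrix n n ℂ) (f : ℝ → ℝ) :
    ContinuousOn f (spectrum ℝ A) := A.finite_real_spectrum.continuousOn f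

theorem oc_transpose {n : Type*} [Fintype n] [DecidableEq n] (f : ℝ → ℝ) {A : Matrix n n ℂ}
    (hA : A.PosDef) : cfc (fun x => x * f x⁻¹) A = A * cfc f A⁻¹ := by
  have hA' : IsSelfAdjoint A := hA.1
  have hinv : A⁻¹ = cfc (fun x : ℝ => x⁻¹) A := by
    apply Matrix.inv_eq_right_inv
    have h := cfc_mul (fun x : ℝ => x) (fun x : ℝ => x⁻¹) A (oc_cont _ _) (oc_cont _ _)
    rw [cfc_id' ℝ A] at h
    rw [← h, ← cfc_one ℝ A]
    exact cfc_congr fun x hx => by simp [(oc_spec_pos hA hx).ne']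
  rw [cfc_mul (fun x : ℝ => x) (fun x => f x⁻¹) A (oc_cont _ _) (oc_cont _ _), cfc_id' ℝ A, hinv,
    cfc_comp' f (fun x => x⁻¹) A ((A.finite_real_spectrum.image _).continuousOn _) (oc_cont _ _)]

theorem oc_sqrt {n : Type*} [Fintype n] [DecidableEq n] {A : Matrix n n ℂ}
    (hA : A.PosDef) : ∃ R : Matrix n n ℂ, Rᴴ = R ∧ R * R = A ∧ A⁻¹ * R = R * A⁻¹ ∧
      R * A⁻¹ * R = 1 := by
  have hA' : IsSelfAdjoint A := hA.1
  have hR : cfc Real.sqrt A * cfc Real.sqrt A = A := by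
    rw [← cfc_mul _ _ A (oc_cont _ _) (oc_cont _ _)]
    conv_rhs => rw [← cfc_id' ℝ A]
    exact cfc_congr fun x hx => Real.mul_self_sqrt (oc_spec_pos hA hx).le
  have hdet : IsUnit A.det := (Matrix.isUnit_iff_isUnit_det A).1 hA.isUnit
  have hc : A⁻¹ * cfc Real.sqrt A = cfc Real.sqrt A * A⁻¹ := by
    generalize cfc Real.sqrt A = R at hR
    have h1 : A * R = R * A := by rw [← hR, Matrix.mul_assoc]
    calc A⁻¹ * R = A⁻¹ * (R * A) * A⁻¹ := by
          rw [Matrix.mul_assoc, Matrix.mul_assoc R, Matrix.mul_nonsing_inv _ hdet, Matrix.mul_one]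
      _ = R * A⁻¹ := by
          rw [← h1, ← Matrix.mul_assoc, Matrix.nonsing_inv_mul _ hdet, Matrix.one_mul]
  refine ⟨cfc Real.sqrt A, (cfc_predicate Real.sqrt A : IsSelfAdjoint _), hR, hc, ?_⟩
  rw [← hc, Matrix.mul_assoc, hR, Matrix.nonsing_inv_mul _ hdet]

theorem oc_blocks {m n : Type*} [Fintype m] [DecidableEq m] [Fintype n] [DecidableEq n]
    {A : Matrix m m ℂ} {B : Matrix n n ℂ} (hA : A.PosDef) (hB : B.PosDef) :
    (fromBlocks A 0 0 B).PosDef := by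
  have hAd : IsUnit A.det := (Matrix.isUnit_iff_isUnit_det A).1 hA.isUnit
  have hBd : IsUnit B.det := (Matrix.isUnit_iff_isUnit_det B).1 hB.isUnit
  have h : (fromBlocks A 0 0 B).PosSemidef := by
    have : Invertible A := A.invertibleOfIsUnitDet hAd
    have := (Matrix.PosDef.fromBlocks₁₁ (0 : Matrix m n ℂ) B hA).2 (by simpa using hB.posSemidef)
    simpa using this
  rw [h.posDef_iff_isUnit, Matrix.isUnit_iff_isUnit_det, Matrix.det_fromBlocks_zero₂₁]
  exact hAd.mul hBd

theorem oc_cfc_blocks {m n : Type*} [Fintype m] [DecidableEq m] [Fintype n] [DecidableEq n]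
    (f : ℝ → ℝ) {A : Matrix m m ℂ} {B : Matrix n n ℂ} (hA : A.PosDef) (hB : B.PosDef) :
    cfc f (fromBlocks A 0 0 B) = fromBlocks (cfc f A) 0 0 (cfc f B) := by
  have hT := (oc_blocks hA hB).1
  have h1 := oc_intertwine f hT hA.1 (fromRows 1 0) (by
    rw [← fromRows_fromCols_eq_fromBlocks, fromRows_mul, fromRows_mul, fromCols_mul_fromRows,
      fromCols_mul_fromRows]; simp)
  have h2 := oc_intertwine f hT hB.1 (fromRows 0 1) (by
    rw [← fromRows_fromCols_eq_fromBlocks, fromRows_mul, fromRows_mul, fromCols_mul_fromRows,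
      fromCols_mul_fromRows]; simp)
  have h3 := congrArg₂ fromCols h1 h2
  rw [← mul_fromCols] at h3
  have h4 : fromCols (fromRows (1 : Matrix m m ℂ) (0 : Matrix n m ℂ)) (fromRows (0 : Matrix m n ℂ) (1 : Matrix n n ℂ)) = 1 := by
    rw [fromCols_fromRows_eq_fromBlocks, fromBlocks_one]
  rw [h4, Matrix.mul_one] at h3
  rw [h3, fromRows_mul, fromRows_mul, fromCols_fromRows_eq_fromBlocks]
  simp

theorem oc_forward {f : ℝ → ℝ} (hf : OperatorConvexOn f) :
    OperatorConvexOn (fun x => x * f x⁻¹) := by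
  intro m X Y hX hY t h0 h1
  have hS := oc_comb hX hY h0 h1
  rw [oc_transpose f hX, oc_transpose f hY, oc_transpose f hS]
  obtain ⟨R, hRh, hRR, hRc, hR1⟩ := oc_sqrt hX
  obtain ⟨Z, hZh, hZZ, hZc, hZ1⟩ := oc_sqrt hY
  set S := t • X + (1 - t) • Y with hSdef
  have hSd : IsUnit S.det := (Matrix.isUnit_iff_isUnit_det S).1 hS.isUnit
  have ht1 : (0 : ℝ) ≤ 1 - t := sub_nonneg.2 h1
  let T := fromBlocks X⁻¹ 0 0 Y⁻¹
  let Q := fromRows (√t • R) (√(1 - t) • Z)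
  have hT : T.PosDef := oc_blocks hX.inv hY.inv
  have hconj : ∀ M N : Matrix (Fin m) (Fin m) ℂ, Qᴴ * fromBlocks M 0 0 N * Q
      = t • (R * M * R) + (1 - t) • (Z * N * Z) := by
    intro M N
    simp only [Q]
    rw [conjTranspose_fromRows_eq_fromCols_conjTranspose, ← fromRows_fromCols_eq_fromBlocks,
      fromCols_mul_fromRows, Matrix.add_mul]
    simp only [mul_fromCols, fromCols_mul_fromRows, conjTranspose_smul, hRh, hZh]
    simp [smul_smul, Real.mul_self_sqrt h0, Real.mul_self_sqrt ht1]
  have hQQ : Qᴴ * Q = S := by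
    have := hconj 1 1
    rw [fromBlocks_one] at this
    simpa [hRR, hZZ] using this
  have hQTQ : Qᴴ * T * Q = 1 := by
    rw [hconj, hR1, hZ1, ← add_smul]; simp
  have hQfQ : Qᴴ * cfc f T * Q = t • (X * cfc f X⁻¹) + (1 - t) • (Y * cfc f Y⁻¹) := by
    rw [oc_cfc_blocks f hX.inv hY.inv, hconj]
    have e1 := oc_intertwine f hX.inv.1 hX.inv.1 R hRc
    have e2 := oc_intertwine f hY.inv.1 hY.inv.1 Z hZc
    rw [Matrix.mul_assoc, e1, ← Matrix.mul_assoc, hRR, Matrix.mul_assoc, e2, ← Matrix.mul_assoc, hZZ]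
  let P := Q * S⁻¹ * Qᴴ
  have hPQ : P * Q = Q := by
    simp only [P]
    rw [Matrix.mul_assoc, hQQ, Matrix.mul_assoc, Matrix.nonsing_inv_mul _ hSd, Matrix.mul_one]
  have hPP : P * P = P := by
    conv_lhs => rw [show P * P = P * (Q * S⁻¹ * Qᴴ) from rfl]
    rw [← Matrix.mul_assoc, ← Matrix.mul_assoc, hPQ]
  have hPh : Pᴴ = P := by
    simp only [P]
    rw [conjTranspose_mul, conjTranspose_mul, conjTranspose_conjTranspose, hS.inv.1.eq,
      Matrix.mul_assoc]
  let W := P + P - 1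
  have hWh : Wᴴ = W := by simp [W, hPh]
  have hWW : W * W = 1 := by
    simp only [W, Matrix.sub_mul, Matrix.mul_sub, Matrix.add_mul, Matrix.mul_add, hPP,
      Matrix.one_mul, Matrix.mul_one]
    abel
  have hWQ : W * Q = Q := by
    simp [W, Matrix.sub_mul, Matrix.add_mul, hPQ]
  have hQW : Qᴴ * W = Qᴴ := by
    have := congrArg conjTranspose hWQ
    rwa [conjTranspose_mul, hWh] at this
  have hWu : IsUnit W := IsUnit.of_mul_eq_one W hWW
  have hT2 : (W * T * W).PosDef := by
    have := (Matrix.IsUnit.posDef_star_left_conjugate_iff (x := T) hWu).2 hT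
    rwa [star_eq_conjTranspose, hWh] at this
  have hT3 := oc_comb hT hT2 (t := 1 / 2) (by norm_num) (by norm_num)
  have main := oc_fintype hf T (W * T * W) hT hT2 (1 / 2) (by norm_num) (by norm_num) hT3.1
  have hfW : cfc f (W * T * W) * W = W * cfc f T :=
    oc_intertwine f hT2.1 hT.1 W (by rw [Matrix.mul_assoc, hWW, Matrix.mul_one])
  have hQfW : Qᴴ * cfc f (W * T * W) * Q = Qᴴ * cfc f T * Q := by
    conv_lhs => rw [show Qᴴ * cfc f (W * T * W) * Q = Qᴴ * cfc f (W * T * W) * (W * Q) by rw [hWQ]]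
    rw [Matrix.mul_assoc, ← Matrix.mul_assoc _ W Q, hfW, Matrix.mul_assoc W, ← Matrix.mul_assoc Qᴴ W,
      hQW, Matrix.mul_assoc]
  have hT3Q : ((1 / 2 : ℝ) • T + (1 - 1 / 2 : ℝ) • (W * T * W)) * Q = Q * S⁻¹ := by
    have a1 : W * T * W * Q = P * T * Q + P * T * Q - T * Q := by
      rw [Matrix.mul_assoc (W * T), hWQ]
      simp [W, Matrix.sub_mul, Matrix.add_mul]
    have a2 : P * T * Q = Q * S⁻¹ := by
      simp only [P]
      rw [Matrix.mul_assoc, Matrix.mul_assoc _ Qᴴ, ← Matrix.mul_assoc Qᴴ, hQTQ, Matrix.mul_one]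
    rw [Matrix.add_mul, Matrix.smul_mul, Matrix.smul_mul, a1, a2]
    module
  have hfT3 := oc_intertwine f hT3.1 hS.inv.1 Q hT3Q
  have fin := main.conjTranspose_mul_mul_same Q
  rw [Matrix.mul_sub, Matrix.sub_mul, Matrix.mul_add, Matrix.add_mul, Matrix.mul_smul,
    Matrix.mul_smul, Matrix.smul_mul, Matrix.smul_mul, hQfW, ← add_smul, Matrix.mul_assoc Qᴴ (cfc f (_ + _)), hfT3,
    ← Matrix.mul_assoc Qᴴ Q, hQQ, hQfQ] at fin
  simpa using fin

/-- `f` is operator convex on `(0,∞)` if and only if its transpose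
`f̃(x) = x · f(1/x)` is operator convex on `(0,∞)`. -/
theorem stmt19 (f : ℝ → ℝ) :
    OperatorConvexOn f ↔ OperatorConvexOn (fun x => x * f x⁻¹) := by
  refine ⟨oc_forward, fun h => ?_⟩
  intro m A B hA hB t h0 h1
  have := oc_forward h m A B hA hB t h0 h1
  have key : ∀ M : Matrix (Fin m) (Fin m) ℂ, M.PosDef →
      cfc (fun x : ℝ => x * (x⁻¹ * f x⁻¹⁻¹)) M = cfc f M := fun M hM =>
    cfc_congr fun x hx => by
      have := (oc_spec_pos hM hx).ne'
      simp [this]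
  rwa [key _ hA, key _ hB, key _ (oc_comb hA hB h0 h1)] at this
end
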